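/- Let ρ be a two-qubit density matrix with a finite pure-state decomposition ρ = ∑_{i=1}^{n} pᵢ |ψᵢ⟩⟨ψᵢ|, where pᵢ ≥ 0 sum to 1 and each |ψᵢ⟩ ∈ ℂ²⊗ℂ² is a unit vector. Then the basis-optimized key rate K^m(ρ) := sup over 2×2 unitaries U_A, U_B of K((U_A⊗U_B)ρ(U_A⊗U_B)†) satisfies K^m(ρ) ≤ ∑_{i=1}^{n} pᵢ S(Tr_B |ψᵢ⟩⟨ψᵢ|). Consequently K^m(ρ) is upper bounded by the entanglement of formation of ρ (the infimum of the right-hand side over all such decompositions). -/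

import Mathlib

/-!
The key rate is convex along a pure-state decomposition, and on a pure state it is at most the
entanglement entropy. All one-qubit entropies are expressed through
`qEnt X = h((1 + √X) / 2)`, the entropy (in nats) of a qubit with squared Bloch radius `X`, and
`concEnt c = qEnt (1 - c²)`, the entanglement entropy of a two-qubit pure state of concurrence `c`.
Two analytic facts carry the proof: `qEnt` is concave on `[0, 1]` (`qEnt_concaveOn`) and `concEnt`
is convex and increasing on `[0, 1]` (`concEnt_convexOn`, `concEnt_monotoneOn`).

*Reduction to pure states.* `Φ(σ)` is a direct sum of two 2×2 blocks, so `K(σ)` is the sum of the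
coherences of the blocks minus `H(e)` (`keyRate_eq`). A block with diagonal `m, n`, off-diagonal
modulus `w` and `T = m + n` has coherence `T (qEnt δ² - qEnt (δ² + ζ²))` with `δ = (m - n) / T` and
`ζ = 2 w / T`. Concavity of `qEnt` bounds this by `T (qEnt (1 - ζ²) - qEnt 1) = T concEnt ζ`
(`blockCoh_le`), with equality for rank-one blocks. The perspective `T concEnt (2 w / T)` is convex
and increasing in `w` (`concEnt_perspective`), and `-H` is convex, which gives
`K(σ) ≤ ∑ pᵢ K(φᵢ)`.

*Pure states.* For amplitudes `a, b, c, d`, concavity of the binary entropy bounds the two block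
coherences together by `h(|a|² + |b|²) = qEnt r²`, where `r` is the `z`-component of the Bloch
vector of the reduced state. If `g` is the off-diagonal entry of the reduced state, then
`r² + 4|g|² = 1 - 4|ad - bc|²`, and Cauchy–Schwarz gives `4|g|² ≤ 1 - (1 - 2e)²`. Concavity of
`qEnt` once more yields `qEnt r² - qEnt (r² + 4|g|²) ≤ qEnt (1 - 4|g|²) ≤ h(e)` (`pure_bound`).

*Local unitaries.* The entanglement entropy depends only on `|ad - bc|`, the modulus of the
determinant of the amplitude matrix, which local unitaries preserve.
-/

open Matrix Complex Kronecker
open scoped ComplexOrder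

noncomputable section

/-- von Neumann entropy (base 2), via eigenvalues; junk value 0 if not Hermitian. -/
noncomputable def vnEntropy {n : Type*} [Fintype n] [DecidableEq n] (ρ : Matrix n n ℂ) : ℝ :=
  if h : ρ.IsHermitian then -∑ i, h.eigenvalues i * Real.logb 2 (h.eigenvalues i) else 0

/-- The diagonal part of a matrix. -/
def diagPart {n : Type*} [Fintype n] [DecidableEq n] (ρ : Matrix n n ℂ) : Matrix n n ℂ :=
  Matrix.diagonal fun i => ρ i i

/-- Relative entropy of coherence in the computational basis. -/
noncomputable def relEntCoh {n : Type*} [Fintype n] [DecidableEq n] (ρ : Matrix n n ℂ) : ℝ :=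
  vnEntropy (diagPart ρ) - vnEntropy ρ

/-- A density matrix: positive semidefinite with trace one. -/
def IsDensity {n : Type*} [Fintype n] [DecidableEq n] (ρ : Matrix n n ℂ) : Prop :=
  ρ.PosSemidef ∧ ρ.trace = 1

/-- Two-qubit index type: the first component is qubit A, the second is qubit B. -/
abbrev Q2 := Fin 2 × Fin 2

/-- Z-parity projector Π⁺ = |00⟩⟨00| + |11⟩⟨11|. -/
def PiPlus : Matrix Q2 Q2 ℂ := Matrix.diagonal fun i => if i.1 = i.2 then 1 else 0

/-- Z-parity projector Π⁻ = |01⟩⟨01| + |10⟩⟨10|. -/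
def PiMinus : Matrix Q2 Q2 ℂ := Matrix.diagonal fun i => if i.1 = i.2 then 0 else 1

/-- Partial dephasing channel Φ(ρ) = Π⁺ρΠ⁺ + Π⁻ρΠ⁻. -/
def dephase (ρ : Matrix Q2 Q2 ℂ) : Matrix Q2 Q2 ℂ :=
  PiPlus * ρ * PiPlus + PiMinus * ρ * PiMinus

/-- Binary entropy (base 2). -/
noncomputable def binEnt (e : ℝ) : ℝ := -(e * Real.logb 2 e) - (1 - e) * Real.logb 2 (1 - e)

/-- X-basis projector Π_x⁻ = |+−⟩⟨+−| + |−+⟩⟨−+|, written entrywise. -/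
def PiXMinus : Matrix Q2 Q2 ℂ :=
  Matrix.of fun i j => (1/4 : ℂ) *
    ((if i.1 = j.1 then 1 else -1) + (if i.2 = j.2 then 1 else -1))

/-- phase i^a for a : Fin 2 -/
def yph : Fin 2 → ℂ := fun a => if a = 0 then 1 else Complex.I

/-- Y-basis projector Π_y⁻ = |+i,+i⟩⟨+i,+i| + |−i,−i⟩⟨−i,−i|, written entrywise. -/
def PiYMinus : Matrix Q2 Q2 ℂ :=
  Matrix.of fun i j => (1/4 : ℂ) *
    (yph i.1 * yph i.2 * star (yph j.1) * star (yph j.2)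
      + star (yph i.1) * star (yph i.2) * yph j.1 * yph j.2)

/-- The matrix ρ(a,b): diagonal (m00,m11,m22,m33), entry a between |00⟩,|11⟩,
entry b between |01⟩,|10⟩, zeros elsewhere. -/
def rhoGen (m00 m11 m22 m33 a b : ℝ) : Matrix Q2 Q2 ℂ :=
  Matrix.of fun i j =>
    if i = j then
      (if i = (0, 0) then (m00 : ℂ) else if i = (0, 1) then (m11 : ℂ)
        else if i = (1, 0) then (m22 : ℂ) else (m33 : ℂ))
    else if (i = ((0 : Fin 2), (0 : Fin 2)) ∧ j = (1, 1)) ∨ (i = (1, 1) ∧ j = (0, 0)) then (a : ℂ)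
    else if (i = ((0 : Fin 2), (1 : Fin 2)) ∧ j = (1, 0)) ∨ (i = (1, 0) ∧ j = (0, 1)) then (b : ℂ)
    else 0

/-- The Bell-diagonal state with weights p0,p1,p2,p3 on |Φ⁺⟩,|Φ⁻⟩,|Ψ⁺⟩,|Ψ⁻⟩. -/
def bellDiag (p0 p1 p2 p3 : ℝ) : Matrix Q2 Q2 ℂ :=
  rhoGen ((p0 + p1)/2) ((p2 + p3)/2) ((p2 + p3)/2) ((p0 + p1)/2) ((p0 - p1)/2) ((p2 - p3)/2)

/-- Partial trace over the first qubit (A). -/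
def trA (M : Matrix Q2 Q2 ℂ) : Matrix (Fin 2) (Fin 2) ℂ :=
  Matrix.of fun j j' => ∑ i : Fin 2, M (i, j) (i, j')

/-- Partial trace over the second qubit (B). -/
def trB (M : Matrix Q2 Q2 ℂ) : Matrix (Fin 2) (Fin 2) ℂ :=
  Matrix.of fun i i' => ∑ j : Fin 2, M (i, j) (i', j)

/-- Coherence-based key-rate functional K(ρ) = C(Φ(ρ)) − H(Tr(Π⁻ρ)). -/
noncomputable def keyRate (ρ : Matrix Q2 Q2 ℂ) : ℝ :=
  relEntCoh (dephase ρ) - binEnt ((PiMinus * ρ).trace.re)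

/-- Outer product |ψ⟩⟨ψ|. -/
def outer (ψ : Q2 → ℂ) : Matrix Q2 Q2 ℂ := Matrix.of fun i j => ψ i * star (ψ j)

/-- Basis-optimized key rate: supremum of K over all local basis changes. -/
noncomputable def Km (ρ : Matrix Q2 Q2 ℂ) : ℝ :=
  sSup {x : ℝ | ∃ U V : Matrix (Fin 2) (Fin 2) ℂ, U ∈ Matrix.unitaryGroup (Fin 2) ℂ ∧
    V ∈ Matrix.unitaryGroup (Fin 2) ℂ ∧ x = keyRate ((U ⊗ₖ V) * ρ * (U ⊗ₖ V)ᴴ)}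

/-! ### Entropy of a qubit as a function of Bloch radius and concurrence -/

/-- Entropy in nats of a qubit state whose Bloch vector has squared length `X ∈ [0, 1]`; its
eigenvalues are `(1 ± √X) / 2`. -/
def qEnt (X : ℝ) : ℝ := Real.binEntropy ((1 + √X) / 2)

/-- Entropy in nats of the reduced state of a two-qubit pure state of concurrence `c ∈ [0, 1]`. -/
def concEnt (c : ℝ) : ℝ := qEnt (1 - c ^ 2)

/-- Monotonicity of `artanh t / t` on `(0, 1)`, up to the factor 2: all coefficients of its power
series are nonnegative. -/
lemma logRatio_mono {s t : ℝ} (hs : 0 < s) (hst : s ≤ t) (ht : t < 1) :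
    (Real.log (1 + s) - Real.log (1 - s)) / s ≤ (Real.log (1 + t) - Real.log (1 - t)) / t := by
  have key : ∀ x : ℝ, 0 < x → x < 1 →
      HasSum (fun k : ℕ => (2 : ℝ) * (1 / (2 * k + 1)) * x ^ (2 * k))
        ((Real.log (1 + x) - Real.log (1 - x)) / x) := by
    intro x hx hx1
    have := (Real.hasSum_log_sub_log_of_abs_lt_one (x := x)
      (abs_lt.2 ⟨by linarith, hx1⟩)).div_const x
    refine this.congr_fun fun k => ?_
    rw [pow_succ]
    field_simp
  refine hasSum_le (fun k => ?_) (key s hs (by linarith)) (key t (by linarith) ht)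
  gcongr

lemma qEnt_continuous : Continuous qEnt := by
  unfold qEnt; fun_prop

lemma qEnt_hasDerivAt {X : ℝ} (h0 : 0 < X) (h1 : X < 1) :
    HasDerivAt qEnt (-((Real.log (1 + √X) - Real.log (1 - √X)) / √X) / 4) X := by
  have ht0 : 0 < √X := Real.sqrt_pos.2 h0
  have ht1 : √X < 1 := by rw [Real.sqrt_lt' one_pos]; simpa using h1
  have hb := Real.hasDerivAt_binEntropy (p := (1 + √X) / 2) (by linarith) (by linarith)
  have hs : HasDerivAt (fun X : ℝ => (1 + √X) / 2) (1 / (2 * √X) / 2) X :=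
    ((Real.hasDerivAt_sqrt h0.ne').const_add 1).div_const 2
  have := hb.comp X hs
  refine this.congr_deriv ?_
  have e1 : 1 - (1 + √X) / 2 = (1 - √X) / 2 := by ring
  rw [e1, Real.log_div (by linarith) two_ne_zero, Real.log_div (by linarith) two_ne_zero]
  field_simp
  ring

lemma qEnt_concaveOn : ConcaveOn ℝ (Set.Icc 0 1) qEnt := by
  refine AntitoneOn.concaveOn_of_deriv (convex_Icc 0 1) qEnt_continuous.continuousOn ?_ ?_
  · rw [interior_Icc]
    exact fun X hX => (qEnt_hasDerivAt hX.1 hX.2).differentiableAt.differentiableWithinAt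
  · rw [interior_Icc]
    intro X hX Y hY hXY
    rw [(qEnt_hasDerivAt hX.1 hX.2).deriv, (qEnt_hasDerivAt hY.1 hY.2).deriv]
    have := logRatio_mono (Real.sqrt_pos.2 hX.1) (Real.sqrt_le_sqrt hXY)
      (by rw [Real.sqrt_lt' one_pos]; simpa using hY.2)
    linarith

lemma qEnt_antitoneOn : AntitoneOn qEnt (Set.Icc 0 1) := by
  intro X hX Y hY hXY
  have h1 : √Y ≤ 1 := Real.sqrt_le_one.2 hY.2
  have h0 := Real.sqrt_nonneg X
  have h2 := Real.sqrt_le_sqrt hXY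
  exact Real.binEntropy_strictAntiOn.antitoneOn ⟨by linarith, by linarith⟩
    ⟨by linarith, by linarith⟩ (by linarith)

lemma qEnt_one : qEnt 1 = 0 := by simp [qEnt]

lemma qEnt_sq (d : ℝ) : qEnt (d ^ 2) = Real.binEntropy ((1 + d) / 2) := by
  unfold qEnt
  rw [Real.sqrt_sq_eq_abs]
  rcases abs_choice d with h | h <;> rw [h]
  rw [← Real.binEntropy_one_sub]; congr 1; ring

/-- A concave function has decreasing increments: the drop of `qEnt` over `[X, X + Y]` is at most its
drop over `[1 - Y, 1]`, where it ends at `qEnt 1 = 0`. -/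
lemma qEnt_sub_le {X Y : ℝ} (hX : 0 ≤ X) (hY : 0 ≤ Y) (hXY : X + Y ≤ 1) :
    qEnt X - qEnt (X + Y) ≤ qEnt (1 - Y) := by
  rcases eq_or_lt_of_le (show X ≤ 1 by linarith) with h | h
  · have : Y = 0 := by linarith
    subst this; simp [qEnt_one]
  have hD : 0 < 1 - X := by linarith
  have m0 : X ∈ Set.Icc (0 : ℝ) 1 := ⟨hX, h.le⟩
  have m1 : (1 : ℝ) ∈ Set.Icc (0 : ℝ) 1 := by simp
  have w1 : 0 ≤ (1 - X - Y) / (1 - X) := div_nonneg (by linarith) hD.le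
  have w2 : 0 ≤ Y / (1 - X) := div_nonneg hY hD.le
  have a := qEnt_concaveOn.2 m0 m1 w1 w2 (by field_simp; ring)
  have b := qEnt_concaveOn.2 m0 m1 w2 w1 (by field_simp; ring)
  -- Both `X + Y` and `1 - Y` are convex combinations of `X` and `1`, with swapped weights.
  have ea : (1 - X - Y) / (1 - X) * X + Y / (1 - X) * 1 = X + Y := by field_simp; ring
  have eb : Y / (1 - X) * X + (1 - X - Y) / (1 - X) * 1 = 1 - Y := by field_simp; ring
  simp only [smul_eq_mul, qEnt_one, ea, eb, mul_zero, add_zero] at a b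
  have : (1 - X - Y) / (1 - X) * qEnt X + Y / (1 - X) * qEnt X = qEnt X := by
    field_simp; ring
  linarith

lemma arsinh_ratio_anti {x y : ℝ} (hx : 0 < x) (hxy : x ≤ y) :
    Real.arsinh y / y ≤ Real.arsinh x / x := by
  have hc : ConcaveOn ℝ (Set.Ici 0) Real.arsinh := by
    refine AntitoneOn.concaveOn_of_deriv (convex_Ici 0) Real.continuous_arsinh.continuousOn
      Real.differentiable_arsinh.differentiableOn ?_
    rw [interior_Ici]
    intro a ha b hb hab
    rw [(Real.hasDerivAt_arsinh a).deriv, (Real.hasDerivAt_arsinh b).deriv]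
    have : (0 : ℝ) < a := ha
    gcongr
  have := hc.slope_anti (x := 0) (by simp) (show x ∈ _ from ⟨hx.le, by simpa using hx.ne'⟩)
    (show y ∈ _ from ⟨(hx.trans_le hxy).le, by simpa using (hx.trans_le hxy).ne'⟩) hxy
  simpa [slope_def_field] using this

/-- For `t = √(1 - c²)`, the identity `artanh t = arsinh (t / c)`; it brings the derivative of `concEnt`
to the form `arsinh y / y`. -/
lemma logRatio_eq_arsinh {c : ℝ} (h0 : 0 < c) (h1 : c < 1) :
    c * ((Real.log (1 + √(1 - c ^ 2)) - Real.log (1 - √(1 - c ^ 2))) / √(1 - c ^ 2)) / 2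
      = Real.arsinh (√(1 - c ^ 2) / c) / (√(1 - c ^ 2) / c) := by
  have hp : 0 < 1 - c ^ 2 := by nlinarith
  set t := √(1 - c ^ 2) with ht
  have ht0 : 0 < t := Real.sqrt_pos.2 hp
  have hsq : t ^ 2 = 1 - c ^ 2 := Real.sq_sqrt hp.le
  have ht1 : t < 1 := by nlinarith
  have e1 : √(1 + (t / c) ^ 2) = 1 / c := by
    rw [show 1 + (t / c) ^ 2 = (1 / c) ^ 2 by field_simp; linarith]
    exact Real.sqrt_sq (by positivity)
  have e2 : Real.arsinh (t / c) = Real.log (1 + t) - Real.log c := by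
    rw [Real.arsinh, e1, ← Real.log_div (by linarith) h0.ne']; congr 1; ring
  have e3 : 2 * Real.log c = Real.log (1 + t) + Real.log (1 - t) := by
    rw [← Real.log_mul (by linarith) (by linarith), show (1 + t) * (1 - t) = c ^ 2 by linarith,
      Real.log_pow]; norm_num
  rw [e2]
  field_simp
  linarith

lemma concEnt_continuous : Continuous concEnt :=
  qEnt_continuous.comp (by fun_prop)

lemma concEnt_hasDerivAt {c : ℝ} (h0 : 0 < c) (h1 : c < 1) :
    HasDerivAt concEnt (Real.arsinh (√(1 - c ^ 2) / c) / (√(1 - c ^ 2) / c)) c := by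
  have hp : 0 < 1 - c ^ 2 := by nlinarith
  have hs : HasDerivAt (fun c : ℝ => 1 - c ^ 2) (-(2 * c)) c := by
    simpa using (hasDerivAt_pow 2 c).const_sub 1
  have := (qEnt_hasDerivAt hp (by nlinarith)).comp c hs
  refine this.congr_deriv ?_
  rw [← logRatio_eq_arsinh h0 h1]; ring

lemma concEnt_convexOn : ConvexOn ℝ (Set.Icc 0 1) concEnt := by
  refine MonotoneOn.convexOn_of_deriv (convex_Icc 0 1) concEnt_continuous.continuousOn ?_ ?_
  · rw [interior_Icc]
    exact fun X hX => (concEnt_hasDerivAt hX.1 hX.2).differentiableAt.differentiableWithinAt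
  · rw [interior_Icc]
    intro X hX Y hY hXY
    rw [(concEnt_hasDerivAt hX.1 hX.2).deriv, (concEnt_hasDerivAt hY.1 hY.2).deriv]
    have hX0 := hX.1
    have hY0 := hY.1
    have hY1 := hY.2
    have hp : 0 < 1 - Y ^ 2 := by nlinarith
    exact arsinh_ratio_anti (div_pos (Real.sqrt_pos.2 hp) hY.1) (by gcongr)

lemma concEnt_monotoneOn : MonotoneOn concEnt (Set.Icc 0 1) := by
  intro c hc d hd h
  have hc0 := hc.1
  exact qEnt_antitoneOn ⟨by nlinarith [hd.1, hd.2], by nlinarith⟩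
    ⟨by nlinarith [hc.2], by nlinarith⟩ (by gcongr)

lemma concEnt_nonneg {c : ℝ} (h0 : 0 ≤ c) (h1 : c ≤ 1) : 0 ≤ concEnt c := by
  have h := concEnt_monotoneOn (by simp) (show c ∈ Set.Icc (0 : ℝ) 1 from ⟨h0, h1⟩) h0
  simpa [concEnt, qEnt_one] using h

lemma negMulLog_split (T x : ℝ) :
    Real.negMulLog (T * x) + Real.negMulLog (T * (1 - x)) =
      T * Real.binEntropy x + Real.negMulLog T := by
  rw [Real.negMulLog_mul, Real.negMulLog_mul,
    Real.binEntropy_eq_negMulLog_add_negMulLog_one_sub]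
  ring

/-! ### Coherence of a 2×2 block -/

/-- Relative entropy of coherence, in nats, of the (unnormalized) positive semidefinite matrix with
diagonal `m, n` and off-diagonal entry of modulus `w`; its eigenvalues are
`(m + n ± √((m - n)² + 4 w²)) / 2`. -/
def blockCoh (m n w : ℝ) : ℝ :=
  Real.negMulLog m + Real.negMulLog n
    - (Real.negMulLog ((m + n + √((m - n) ^ 2 + 4 * w ^ 2)) / 2)
      + Real.negMulLog ((m + n - √((m - n) ^ 2 + 4 * w ^ 2)) / 2))

lemma blockCoh_le {m n w : ℝ} (hm : 0 ≤ m) (hn : 0 ≤ n) (hw : w ^ 2 ≤ m * n) :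
    blockCoh m n w ≤ (m + n) * concEnt (2 * w / (m + n)) := by
  rcases (add_nonneg hm hn).eq_or_lt with h | hT
  · have hm0 : m = 0 := by linarith
    have hn0 : n = 0 := by linarith
    subst hm0 hn0
    have : w = 0 := by nlinarith
    subst this
    simp [blockCoh]
  set T := m + n with hTdef
  set d := (m - n) / T with hd
  set z := 2 * w / T with hz
  have hr : √((m - n) ^ 2 + 4 * w ^ 2) = T * √(d ^ 2 + z ^ 2) := by
    rw [show (m - n) ^ 2 + 4 * w ^ 2 = T ^ 2 * (d ^ 2 + z ^ 2) by
      rw [hd, hz]; field_simp; ring, Real.sqrt_mul (by positivity), Real.sqrt_sq hT.le]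
  have hle : d ^ 2 + z ^ 2 ≤ 1 := by
    rw [hd, hz, div_pow, div_pow, ← add_div, div_le_one (by positivity), hTdef]
    nlinarith
  have e1 : Real.negMulLog m + Real.negMulLog n = T * qEnt (d ^ 2) + Real.negMulLog T := by
    rw [qEnt_sq, ← negMulLog_split]
    congr 2 <;> rw [hd] <;> field_simp <;> rw [hTdef] <;> ring
  have e2 : Real.negMulLog ((T + √((m - n) ^ 2 + 4 * w ^ 2)) / 2)
      + Real.negMulLog ((T - √((m - n) ^ 2 + 4 * w ^ 2)) / 2)
      = T * qEnt (d ^ 2 + z ^ 2) + Real.negMulLog T := by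
    rw [qEnt, ← negMulLog_split, hr]
    congr 2 <;> ring
  have := mul_le_mul_of_nonneg_left (qEnt_sub_le (sq_nonneg d) (sq_nonneg z) hle) hT.le
  unfold blockCoh concEnt
  rw [← hTdef, e1, e2]
  linarith

/-- Joint convexity of the perspective `(t, w) ↦ t * concEnt (2 * w / t)`, combined with monotonicity in
`w`. Terms with `t i = 0` contribute 0 on the right. -/
lemma concEnt_perspective {ι : Type*} [Fintype ι] {p t w : ι → ℝ} {W : ℝ}
    (hp : ∀ i, 0 ≤ p i) (hw : ∀ i, 0 ≤ w i) (hwt : ∀ i, 2 * w i ≤ t i)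
    (hW0 : 0 ≤ W) (hW : W ≤ ∑ i, p i * w i) :
    (∑ i, p i * t i) * concEnt (2 * W / ∑ i, p i * t i) ≤
      ∑ i, p i * (t i * concEnt (2 * w i / t i)) := by
  have ht : ∀ i, 0 ≤ t i := fun i => by linarith [hw i, hwt i]
  have hmem : ∀ i, 2 * w i / t i ∈ Set.Icc (0 : ℝ) 1 := fun i =>
    ⟨div_nonneg (by linarith [hw i]) (ht i), div_le_one_of_le₀ (hwt i) (ht i)⟩
  have hpt : ∀ i, 0 ≤ p i * t i := fun i => mul_nonneg (hp i) (ht i)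
  rcases (Finset.sum_nonneg fun i _ => hpt i : 0 ≤ ∑ i, p i * t i).eq_or_lt with h | hT
  · rw [← h, zero_mul]
    exact Finset.sum_nonneg fun i _ => mul_nonneg (hp i)
      (mul_nonneg (ht i) (concEnt_nonneg (hmem i).1 (hmem i).2))
  set T := ∑ i, p i * t i with hTdef
  have hsum : ∑ i, p i * t i / T = 1 := by
    rw [← Finset.sum_div]; exact div_self hT.ne'
  have hJ := concEnt_convexOn.map_sum_le (t := Finset.univ) (w := fun i => p i * t i / T)
    (p := fun i => 2 * w i / t i) (fun i _ => div_nonneg (hpt i) hT.le) hsum (fun i _ => hmem i)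
  have hmem' := concEnt_convexOn.1.sum_mem (t := Finset.univ) (w := fun i => p i * t i / T)
    (z := fun i => 2 * w i / t i) (fun i _ => div_nonneg (hpt i) hT.le) hsum (fun i _ => hmem i)
  have havg : ∑ i, (p i * t i / T) • (2 * w i / t i) = 2 * (∑ i, p i * w i) / T := by
    rw [Finset.mul_sum, Finset.sum_div]
    refine Finset.sum_congr rfl fun i _ => ?_
    rcases (ht i).eq_or_lt with h | h
    · have : w i = 0 := by linarith [hw i, hwt i]
      simp [this]
    · rw [smul_eq_mul]; field_simp
  rw [havg] at hJ hmem'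
  have hle : 2 * W / T ≤ 2 * (∑ i, p i * w i) / T := by gcongr
  have hmono := concEnt_monotoneOn
    (show 2 * W / T ∈ Set.Icc (0 : ℝ) 1 from ⟨by positivity, hle.trans hmem'.2⟩) hmem' hle
  calc T * concEnt (2 * W / T)
      ≤ T * ∑ i, (p i * t i / T) • concEnt (2 * w i / t i) := by
        gcongr; exact hmono.trans hJ
    _ = _ := by
        rw [Finset.mul_sum]
        refine Finset.sum_congr rfl fun i _ => ?_
        rw [smul_eq_mul]; field_simp

/-- A rank-one block with diagonal `x², y²` has coherence `T h(x² / T)`, where `T = x² + y²`. -/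
lemma mul_concEnt_pure (x y : ℝ) :
    (x ^ 2 + y ^ 2) * concEnt (2 * (x * y) / (x ^ 2 + y ^ 2)) =
      (x ^ 2 + y ^ 2) * Real.binEntropy (x ^ 2 / (x ^ 2 + y ^ 2)) := by
  rcases (show 0 ≤ x ^ 2 + y ^ 2 by positivity).eq_or_lt with h | h
  · rw [← h]; simp
  congr 1
  rw [concEnt, show 1 - (2 * (x * y) / (x ^ 2 + y ^ 2)) ^ 2
    = ((x ^ 2 - y ^ 2) / (x ^ 2 + y ^ 2)) ^ 2 by field_simp; ring, qEnt_sq]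
  congr 1; field_simp; ring

lemma binEntropy_two_le {x y s t : ℝ} (hx : 0 ≤ x) (hxs : x ≤ s) (hy : 0 ≤ y) (hyt : y ≤ t)
    (hst : s + t = 1) :
    s * Real.binEntropy (x / s) + t * Real.binEntropy (y / t) ≤ Real.binEntropy (x + y) := by
  have hs : 0 ≤ s := hx.trans hxs
  have ht : 0 ≤ t := hy.trans hyt
  have h := Real.strictConcave_binEntropy.concaveOn.2
    (show x / s ∈ Set.Icc (0 : ℝ) 1 from ⟨div_nonneg hx hs, div_le_one_of_le₀ hxs hs⟩)
    (show y / t ∈ Set.Icc (0 : ℝ) 1 from ⟨div_nonneg hy ht, div_le_one_of_le₀ hyt ht⟩) hs ht hst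
  have e : ∀ {x s : ℝ}, 0 ≤ x → x ≤ s → s * (x / s) = x := by
    intro x s hx hs
    rcases (hx.trans hs).eq_or_lt with h | h
    · have : x = 0 := by linarith
      simp [this]
    · field_simp
  simpa only [smul_eq_mul, e hx hxs, e hy hyt] using h

/-- The key rate of a pure state with amplitudes `a, b, c, d` on `|00⟩, |01⟩, |10⟩, |11⟩` is at most
its entanglement entropy (both in nats). -/
lemma pure_bound (a b c d : ℂ) (h : ‖a‖ ^ 2 + ‖b‖ ^ 2 + ‖c‖ ^ 2 + ‖d‖ ^ 2 = 1) :
    (‖a‖ ^ 2 + ‖d‖ ^ 2) * concEnt (2 * (‖a‖ * ‖d‖) / (‖a‖ ^ 2 + ‖d‖ ^ 2))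
      + (‖b‖ ^ 2 + ‖c‖ ^ 2) * concEnt (2 * (‖b‖ * ‖c‖) / (‖b‖ ^ 2 + ‖c‖ ^ 2))
      - Real.binEntropy (‖b‖ ^ 2 + ‖c‖ ^ 2) ≤ concEnt (2 * ‖a * d - b * c‖) := by
  rw [mul_concEnt_pure, mul_concEnt_pure]
  have h1 := binEntropy_two_le (sq_nonneg ‖a‖)
    (show ‖a‖ ^ 2 ≤ ‖a‖ ^ 2 + ‖d‖ ^ 2 by nlinarith [sq_nonneg ‖d‖])
    (sq_nonneg ‖b‖) (show ‖b‖ ^ 2 ≤ ‖b‖ ^ 2 + ‖c‖ ^ 2 by nlinarith [sq_nonneg ‖c‖])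
    (by linarith)
  -- `g` is the modulus of the off-diagonal entry of the reduced state, `r` the `z`-component of its
  -- Bloch vector, `D²` its determinant, and `e` the weight of the odd-parity subspace.
  set g := ‖a * star c + b * star d‖ with hg
  set D := ‖a * d - b * c‖ with hD
  set r := ‖a‖ ^ 2 + ‖b‖ ^ 2 - ‖c‖ ^ 2 - ‖d‖ ^ 2 with hr
  set e := ‖b‖ ^ 2 + ‖c‖ ^ 2 with he
  have hid : (‖a‖ ^ 2 + ‖b‖ ^ 2) * (‖c‖ ^ 2 + ‖d‖ ^ 2) = g ^ 2 + D ^ 2 := by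
    rw [hg, hD]
    simp only [← Complex.normSq_eq_norm_sq, Complex.normSq_apply]
    simp
    ring
  have hsum : r ^ 2 + 4 * g ^ 2 = 1 - (2 * D) ^ 2 := by
    have : (‖a‖ ^ 2 + ‖b‖ ^ 2 + ‖c‖ ^ 2 + ‖d‖ ^ 2) ^ 2 = 1 := by rw [h]; norm_num
    rw [hr]; nlinarith
  have hg1 : g ≤ ‖a‖ * ‖c‖ + ‖b‖ * ‖d‖ := by
    refine (norm_add_le _ _).trans ?_
    simp
  have hg0 : 0 ≤ g := norm_nonneg _
  have hg2 : g ^ 2 ≤ (1 - e) * e := by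
    have : (1 - e) * e = (‖a‖ ^ 2 + ‖d‖ ^ 2) * (‖b‖ ^ 2 + ‖c‖ ^ 2) := by
      rw [← he]; congr 1; linarith
    rw [this]
    calc g ^ 2 ≤ (‖a‖ * ‖c‖ + ‖b‖ * ‖d‖) ^ 2 := by gcongr
      _ ≤ _ := by nlinarith [sq_nonneg (‖a‖ * ‖b‖ - ‖c‖ * ‖d‖)]
  have h2 := qEnt_sub_le (sq_nonneg r) (by positivity : 0 ≤ 4 * g ^ 2)
    (by rw [hsum]; nlinarith [sq_nonneg D])
  have h3 : qEnt (1 - 4 * g ^ 2) ≤ qEnt ((1 - 2 * e) ^ 2) := by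
    refine qEnt_antitoneOn ⟨sq_nonneg _, ?_⟩ ⟨?_, by nlinarith⟩ (by nlinarith) <;>
    nlinarith [sq_nonneg (1 - 2 * e)]
  rw [qEnt_sq, ← Real.binEntropy_one_sub, show 1 - (1 + (1 - 2 * e)) / 2 = e by ring] at h3
  rw [hsum, qEnt_sq, show (1 + r) / 2 = ‖a‖ ^ 2 + ‖b‖ ^ 2 by rw [hr]; linarith] at h2
  unfold concEnt
  linarith

/-! ### Entropies from characteristic polynomials -/

lemma vnEntropy_of_charpoly {n : Type*} [Fintype n] [DecidableEq n] {M : Matrix n n ℂ}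
    (hM : M.IsHermitian) (μ : n → ℝ)
    (h : M.charpoly = ∏ i, (Polynomial.X - Polynomial.C (μ i : ℂ))) :
    vnEntropy M = (∑ i, Real.negMulLog (μ i)) / Real.log 2 := by
  have h1 := hM.roots_charpoly_eq_eigenvalues
  rw [h, Polynomial.roots_prod _ _ (by
    simp [Finset.prod_ne_zero_iff, Polynomial.X_sub_C_ne_zero])] at h1
  have h2 := congrArg (fun s => (s.map fun z : ℂ => Real.negMulLog z.re).sum) h1
  simp only [Polynomial.roots_X_sub_C, Multiset.bind_singleton, Multiset.map_map] at h2
  have h3 : ∑ i, Real.negMulLog (μ i) = ∑ i, Real.negMulLog (hM.eigenvalues i) := by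
    exact h2
  rw [vnEntropy, dif_pos hM, h3, Finset.sum_div, ← Finset.sum_neg_distrib]
  refine Finset.sum_congr rfl fun i _ => ?_
  rw [Real.negMulLog, Real.logb]; ring

lemma binEnt_eq (e : ℝ) : binEnt e = Real.binEntropy e / Real.log 2 := by
  rw [binEnt, Real.binEntropy_eq_negMulLog_add_negMulLog_one_sub, Real.negMulLog, Real.negMulLog,
    Real.logb, Real.logb]
  ring

lemma charpoly_two {M : Matrix (Fin 2) (Fin 2) ℂ} {x y : ℝ} (ht : M.trace = ((x + y : ℝ) : ℂ))
    (hd : M.det = ((x * y : ℝ) : ℂ)) :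
    M.charpoly = (Polynomial.X - Polynomial.C (x : ℂ)) * (Polynomial.X - Polynomial.C (y : ℂ)) := by
  rw [Matrix.charpoly_fin_two, ht, hd]
  push_cast
  simp only [map_add, map_mul]
  ring

/-- Splits the two-qubit basis by parity: the left summand lists `00, 11`, the right one `01, 10`. -/
def parityEquiv : Fin 2 ⊕ Fin 2 ≃ Q2 where
  toFun := Sum.elim (fun i => (i, i)) (fun i => (i, 1 - i))
  invFun q := if q.1 = q.2 then Sum.inl q.1 else Sum.inr q.1
  left_inv := by decide
  right_inv := by decide

lemma dephase_apply (σ : Matrix Q2 Q2 ℂ) (i j : Q2) :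
    dephase σ i j = if (i.1 = i.2 ↔ j.1 = j.2) then σ i j else 0 := by
  simp only [dephase, PiPlus, PiMinus, Matrix.add_apply, Matrix.mul_diagonal,
    Matrix.diagonal_mul]
  by_cases h1 : i.1 = i.2 <;> by_cases h2 : j.1 = j.2 <;> simp [h1, h2]

lemma dephase_charpoly (σ : Matrix Q2 Q2 ℂ) :
    (dephase σ).charpoly =
      (!![σ (0, 0) (0, 0), σ (0, 0) (1, 1); σ (1, 1) (0, 0), σ (1, 1) (1, 1)]).charpoly *
      (!![σ (0, 1) (0, 1), σ (0, 1) (1, 0); σ (1, 0) (0, 1), σ (1, 0) (1, 0)]).charpoly := by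
  rw [← Matrix.charpoly_reindex parityEquiv.symm (dephase σ),
    ← Matrix.charpoly_fromBlocks_zero₁₂ (M₂₁ := 0)]
  congr 1
  ext i j
  rcases i with i | i <;> rcases j with j | j <;> fin_cases i <;> fin_cases j <;>
    simp [parityEquiv, dephase_apply, -Fin.isValue]

lemma block_eigen {m n : ℝ} {z z' : ℂ} (hz : z' = star z) :
    (!![(m : ℂ), z; z', (n : ℂ)]).charpoly =
      (Polynomial.X - Polynomial.C
        (((m + n + √((m - n) ^ 2 + 4 * ‖z‖ ^ 2)) / 2 : ℝ) : ℂ)) *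
      (Polynomial.X - Polynomial.C
        (((m + n - √((m - n) ^ 2 + 4 * ‖z‖ ^ 2)) / 2 : ℝ) : ℂ)) := by
  have hs := Real.sq_sqrt (show 0 ≤ (m - n) ^ 2 + 4 * ‖z‖ ^ 2 by positivity)
  set s := √((m - n) ^ 2 + 4 * ‖z‖ ^ 2)
  refine charpoly_two ?_ ?_
  · rw [Matrix.trace_fin_two_of]; push_cast; ring
  · have e : (m + n + s) / 2 * ((m + n - s) / 2) = m * n - ‖z‖ ^ 2 := by nlinarith
    rw [Matrix.det_fin_two_of, e, hz]
    have := Complex.mul_conj' z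
    push_cast
    rw [← this]; rfl

lemma keyRate_eq {σ : Matrix Q2 Q2 ℂ} (hσ : σ.IsHermitian) {d : Q2 → ℝ}
    (hd : ∀ k, σ k k = (d k : ℂ)) :
    keyRate σ = (blockCoh (d (0, 0)) (d (1, 1)) ‖σ (0, 0) (1, 1)‖
      + blockCoh (d (0, 1)) (d (1, 0)) ‖σ (0, 1) (1, 0)‖
      - Real.binEntropy (d (0, 1) + d (1, 0))) / Real.log 2 := by
  have hdiag : diagPart (dephase σ) = Matrix.diagonal fun i => (d i : ℂ) := by
    unfold diagPart; congr 1; ext i; simp [dephase_apply, hd]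
  have h1 : vnEntropy (diagPart (dephase σ)) = (∑ i, Real.negMulLog (d i)) / Real.log 2 := by
    rw [hdiag]
    refine vnEntropy_of_charpoly ?_ d (Matrix.charpoly_diagonal _)
    rw [Matrix.isHermitian_diagonal_iff]
    intro i
    exact Complex.conj_ofReal _
  have hH : (dephase σ).IsHermitian := by
    ext i j
    simp only [Matrix.conjTranspose_apply, dephase_apply]
    by_cases h : (i.1 = i.2 ↔ j.1 = j.2)
    · rw [if_pos h, if_pos h.symm]; exact hσ.apply i j
    · rw [if_neg h, if_neg (fun h' => h h'.symm), star_zero]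
  set r := √((d (0, 0) - d (1, 1)) ^ 2 + 4 * ‖σ (0, 0) (1, 1)‖ ^ 2) with hr
  set s := √((d (0, 1) - d (1, 0)) ^ 2 + 4 * ‖σ (0, 1) (1, 0)‖ ^ 2) with hs
  have h2 := vnEntropy_of_charpoly hH
    (fun q => !![(d (0, 0) + d (1, 1) + r) / 2, (d (0, 1) + d (1, 0) + s) / 2;
      (d (0, 1) + d (1, 0) - s) / 2, (d (0, 0) + d (1, 1) - r) / 2] q.1 q.2) (by
      rw [dephase_charpoly, hd, hd, hd, hd, block_eigen (hσ.apply _ _).symm,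
        block_eigen (hσ.apply _ _).symm, ← hr, ← hs]
      simp only [Fintype.prod_prod_type, Fin.prod_univ_two]
      simp
      ring)
  have h3 : (PiMinus * σ).trace.re = d (0, 1) + d (1, 0) := by
    simp [Matrix.trace, PiMinus, Fintype.sum_prod_type, hd]
  rw [keyRate, relEntCoh, h1, h2, h3, binEnt_eq, blockCoh, blockCoh, ← hr, ← hs]
  simp only [Fintype.sum_prod_type, Fin.sum_univ_two]
  simp
  ring

/-! ### Pure states -/

/-- The 2×2 matrix of amplitudes of a two-qubit vector; twice the modulus of its determinant is the
concurrence. -/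
def ampMat (ψ : Q2 → ℂ) : Matrix (Fin 2) (Fin 2) ℂ := Matrix.of fun i j => ψ (i, j)

lemma trB_outer (ψ : Q2 → ℂ) : trB (outer ψ) = ampMat ψ * (ampMat ψ)ᴴ := by
  ext i j
  simp [trB, outer, ampMat, Matrix.mul_apply]

lemma vnEntropy_trB_outer {ψ : Q2 → ℂ} (hψ : ∑ k, ‖ψ k‖ ^ 2 = 1) :
    vnEntropy (trB (outer ψ)) = concEnt (2 * ‖(ampMat ψ).det‖) / Real.log 2 := by
  set D := ‖(ampMat ψ).det‖ with hD
  rw [trB_outer]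
  have htr : (ampMat ψ * (ampMat ψ)ᴴ).trace = 1 := by
    have : (ampMat ψ * (ampMat ψ)ᴴ).trace = ((∑ k, ‖ψ k‖ ^ 2 : ℝ) : ℂ) := by
      simp [Matrix.trace, ampMat, Matrix.mul_apply, Fintype.sum_prod_type, Complex.mul_conj']
    rw [this, hψ]; simp
  have hdet : (ampMat ψ * (ampMat ψ)ᴴ).det = ((D ^ 2 : ℝ) : ℂ) := by
    rw [Matrix.det_mul, Matrix.det_conjTranspose, hD]
    push_cast
    exact Complex.mul_conj' _
  have hD1 : 0 ≤ 1 - (2 * D) ^ 2 := by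
    have h1 : D ≤ ‖ψ (0, 0)‖ * ‖ψ (1, 1)‖ + ‖ψ (0, 1)‖ * ‖ψ (1, 0)‖ := by
      rw [hD, Matrix.det_fin_two]
      refine (norm_sub_le _ _).trans ?_
      simp [ampMat]
    have h0 : 0 ≤ D := norm_nonneg _
    simp only [Fintype.sum_prod_type, Fin.sum_univ_two] at hψ
    have h2 : 2 * D ≤ 1 := by
      nlinarith [sq_nonneg (‖ψ (0, 0)‖ - ‖ψ (1, 1)‖), sq_nonneg (‖ψ (0, 1)‖ - ‖ψ (1, 0)‖)]
    nlinarith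
  have hs := Real.sq_sqrt hD1
  set s := √(1 - (2 * D) ^ 2) with hsdef
  rw [vnEntropy_of_charpoly (Matrix.isHermitian_mul_conjTranspose_self _)
    ![(1 + s) / 2, 1 - (1 + s) / 2] (by
      rw [Fin.prod_univ_two]
      refine charpoly_two ?_ ?_
      · rw [htr]; simp
      · rw [hdet]; congr 1; simp; nlinarith)]
  rw [Fin.sum_univ_two, concEnt, qEnt, ← hsdef,
    Real.binEntropy_eq_negMulLog_add_negMulLog_one_sub]
  simp

/-! ### The bound for mixed states -/

/-- The bound for a fixed choice of local bases. -/
lemma keyRate_le {n : ℕ} {p : Fin n → ℝ} {φ : Fin n → (Q2 → ℂ)}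
    (hp : ∀ i, 0 ≤ p i) (hpsum : ∑ i, p i = 1) (hφ : ∀ i, ∑ k, ‖φ i k‖ ^ 2 = 1)
    {σ : Matrix Q2 Q2 ℂ} (hσ : σ.PosSemidef)
    (hdec : σ = ∑ i, ((p i : ℝ) : ℂ) • outer (φ i)) :
    keyRate σ ≤ ∑ i, p i * vnEntropy (trB (outer (φ i))) := by
  have hlog : 0 < Real.log 2 := Real.log_pos one_lt_two
  have hent : ∀ k l, σ k l = ∑ i, (p i : ℂ) * (φ i k * star (φ i l)) := by
    intro k l
    rw [hdec, Matrix.sum_apply]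
    simp [outer]
  have hd : ∀ k, σ k k = ((∑ i, p i * ‖φ i k‖ ^ 2 : ℝ) : ℂ) := by
    intro k
    rw [hent]
    push_cast
    refine Finset.sum_congr rfl fun i _ => ?_
    rw [← Complex.mul_conj']; rfl
  have hnorm : ∀ k l, ‖σ k l‖ ≤ ∑ i, p i * (‖φ i k‖ * ‖φ i l‖) := by
    intro k l
    rw [hent]
    refine (norm_sum_le _ _).trans (Finset.sum_le_sum fun i _ => ?_)
    simp [abs_of_nonneg (hp i)]
  have hd0 : ∀ k, 0 ≤ ∑ i, p i * ‖φ i k‖ ^ 2 := fun k =>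
    Finset.sum_nonneg fun i _ => mul_nonneg (hp i) (sq_nonneg _)
  -- The Cauchy–Schwarz inequality with weights `p i`.
  have hcs : ∀ k l, ‖σ k l‖ ^ 2 ≤ (∑ i, p i * ‖φ i k‖ ^ 2) * ∑ i, p i * ‖φ i l‖ ^ 2 := by
    intro k l
    refine (pow_le_pow_left₀ (norm_nonneg _) (hnorm k l) 2).trans ?_
    refine Finset.sum_sq_le_sum_mul_sum_of_sq_le_mul _ (fun i _ => mul_nonneg (hp i) (sq_nonneg _))
      (fun i _ => mul_nonneg (hp i) (sq_nonneg _)) (fun i _ => le_of_eq (by ring))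
  have hblock : ∀ k l, blockCoh (∑ i, p i * ‖φ i k‖ ^ 2) (∑ i, p i * ‖φ i l‖ ^ 2) ‖σ k l‖ ≤
      ∑ i, p i * ((‖φ i k‖ ^ 2 + ‖φ i l‖ ^ 2) *
        concEnt (2 * (‖φ i k‖ * ‖φ i l‖) / (‖φ i k‖ ^ 2 + ‖φ i l‖ ^ 2))) := by
    intro k l
    refine (blockCoh_le (hd0 k) (hd0 l) (hcs k l)).trans ?_
    rw [← Finset.sum_add_distrib]
    simp only [← mul_add]
    exact concEnt_perspective hp (fun i => by positivity)
      (fun i => by nlinarith [sq_nonneg (‖φ i k‖ - ‖φ i l‖)]) (norm_nonneg _) (hnorm k l)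
  have hφ' : ∀ i, ‖φ i (0, 0)‖ ^ 2 + ‖φ i (0, 1)‖ ^ 2 + ‖φ i (1, 0)‖ ^ 2 + ‖φ i (1, 1)‖ ^ 2 = 1 := by
    intro i
    have := hφ i
    simp only [Fintype.sum_prod_type, Fin.sum_univ_two] at this
    linarith
  have hbin := Real.strictConcave_binEntropy.concaveOn.le_map_sum (t := Finset.univ) (w := p)
    (p := fun i => ‖φ i (0, 1)‖ ^ 2 + ‖φ i (1, 0)‖ ^ 2) (fun i _ => hp i) hpsum
    (fun i _ => ⟨by positivity, by
      linarith [hφ' i, sq_nonneg (‖φ i (0, 0)‖), sq_nonneg (‖φ i (1, 1)‖)]⟩)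
  simp only [smul_eq_mul] at hbin
  have hpure : ∑ i, p i * ((‖φ i (0, 0)‖ ^ 2 + ‖φ i (1, 1)‖ ^ 2) *
        concEnt (2 * (‖φ i (0, 0)‖ * ‖φ i (1, 1)‖) / (‖φ i (0, 0)‖ ^ 2 + ‖φ i (1, 1)‖ ^ 2)))
      + ∑ i, p i * ((‖φ i (0, 1)‖ ^ 2 + ‖φ i (1, 0)‖ ^ 2) *
        concEnt (2 * (‖φ i (0, 1)‖ * ‖φ i (1, 0)‖) / (‖φ i (0, 1)‖ ^ 2 + ‖φ i (1, 0)‖ ^ 2)))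
      - ∑ i, p i * Real.binEntropy (‖φ i (0, 1)‖ ^ 2 + ‖φ i (1, 0)‖ ^ 2)
      ≤ ∑ i, p i * concEnt (2 * ‖(ampMat (φ i)).det‖) := by
    rw [← Finset.sum_add_distrib, ← Finset.sum_sub_distrib]
    refine Finset.sum_le_sum fun i _ => ?_
    rw [← mul_add, ← mul_sub, Matrix.det_fin_two]
    exact mul_le_mul_of_nonneg_left (pure_bound _ _ _ _ (hφ' i)) (hp i)
  rw [keyRate_eq hσ.isHermitian hd, ← Finset.sum_add_distrib]
  simp only [← mul_add, vnEntropy_trB_outer (hφ _), mul_div_assoc']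
  rw [← Finset.sum_div]
  refine div_le_div_of_nonneg_right ?_ hlog.le
  have b1 := hblock (0, 0) (1, 1)
  have b2 := hblock (0, 1) (1, 0)
  linarith

/-! ### Local unitaries -/

lemma conj_outer (W : Matrix Q2 Q2 ℂ) (ψ : Q2 → ℂ) :
    W * outer ψ * Wᴴ = outer (W *ᵥ ψ) := by
  have h : ∀ ψ, outer ψ = Matrix.vecMulVec ψ (star ψ) := fun ψ => rfl
  rw [h, h, Matrix.mul_vecMulVec, Matrix.vecMulVec_mul, Matrix.star_mulVec]

lemma sum_norm_sq_mulVec {W : Matrix Q2 Q2 ℂ} (hW : Wᴴ * W = 1) (ψ : Q2 → ℂ) :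
    ∑ k, ‖(W *ᵥ ψ) k‖ ^ 2 = ∑ k, ‖ψ k‖ ^ 2 := by
  have h : ∀ ψ : Q2 → ℂ, ((∑ k, ‖ψ k‖ ^ 2 : ℝ) : ℂ) = (outer ψ).trace := by
    intro ψ
    simp [Matrix.trace, outer, Complex.mul_conj']
  have : ((∑ k, ‖(W *ᵥ ψ) k‖ ^ 2 : ℝ) : ℂ) = ((∑ k, ‖ψ k‖ ^ 2 : ℝ) : ℂ) := by
    rw [h, h, ← conj_outer, Matrix.trace_mul_comm, ← mul_assoc, hW, one_mul]
  exact_mod_cast this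

lemma ampMat_kronecker (U V : Matrix (Fin 2) (Fin 2) ℂ) (ψ : Q2 → ℂ) :
    ampMat ((U ⊗ₖ V) *ᵥ ψ) = U * ampMat ψ * Vᵀ := by
  ext i j
  simp [ampMat, Matrix.mulVec, dotProduct, Matrix.mul_apply, Fintype.sum_prod_type,
    Fin.sum_univ_two]
  ring

lemma norm_det_unitary {U : Matrix (Fin 2) (Fin 2) ℂ} (hU : U ∈ Matrix.unitaryGroup (Fin 2) ℂ) :
    ‖U.det‖ = 1 :=
  CStarRing.norm_of_mem_unitary (Matrix.det_of_mem_unitary hU)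

lemma kronecker_unitary {U V : Matrix (Fin 2) (Fin 2) ℂ}
    (hU : U ∈ Matrix.unitaryGroup (Fin 2) ℂ) (hV : V ∈ Matrix.unitaryGroup (Fin 2) ℂ) :
    (U ⊗ₖ V)ᴴ * (U ⊗ₖ V) = 1 := by
  rw [Matrix.conjTranspose_kronecker, ← Matrix.mul_kronecker_mul]
  rw [Matrix.mem_unitaryGroup_iff', Matrix.star_eq_conjTranspose] at hU hV
  rw [hU, hV, Matrix.one_kronecker_one]

lemma Km_le {n : ℕ} {p : Fin n → ℝ} {ψ : Fin n → (Q2 → ℂ)}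
    (hp : ∀ i, 0 ≤ p i) (hpsum : ∑ i, p i = 1) (hψ : ∀ i, ∑ k, ‖ψ i k‖ ^ 2 = 1)
    {ρ : Matrix Q2 Q2 ℂ} (hρ : ρ.PosSemidef)
    (hdec : ρ = ∑ i, ((p i : ℝ) : ℂ) • outer (ψ i)) :
    Km ρ ≤ ∑ i, p i * vnEntropy (trB (outer (ψ i))) := by
  refine csSup_le ⟨_, 1, 1, one_mem _, one_mem _, rfl⟩ ?_
  rintro x ⟨U, V, hU, hV, rfl⟩
  set W := U ⊗ₖ V with hWdef
  have hW : Wᴴ * W = 1 := kronecker_unitary hU hV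
  have hφ : ∀ i, ∑ k, ‖(W *ᵥ ψ i) k‖ ^ 2 = 1 := fun i => by
    rw [sum_norm_sq_mulVec hW, hψ]
  have h := keyRate_le hp hpsum hφ (hρ.mul_mul_conjTranspose_same W) (by
    rw [hdec, Finset.mul_sum, Finset.sum_mul]
    refine Finset.sum_congr rfl fun i _ => ?_
    rw [Matrix.mul_smul, Matrix.smul_mul, conj_outer])
  refine h.trans_eq (Finset.sum_congr rfl fun i _ => ?_)
  rw [vnEntropy_trB_outer (hφ i), vnEntropy_trB_outer (hψ i), hWdef, ampMat_kronecker,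
    Matrix.det_mul, Matrix.det_mul, Matrix.det_transpose, norm_mul, norm_mul,
    norm_det_unitary hU, norm_det_unitary hV, one_mul, mul_one]

/-- the basis-optimized key rate is upper bounded by the average
entanglement entropy of any pure-state decomposition, hence by the entanglement
of formation. -/
theorem stmt_16 (n : ℕ) (p : Fin n → ℝ) (ψ : Fin n → (Q2 → ℂ))
    (hp : ∀ i, 0 ≤ p i) (hpsum : ∑ i, p i = 1) (hψ : ∀ i, ∑ k, ‖ψ i k‖^2 = 1)
    (ρ : Matrix Q2 Q2 ℂ) (hρ : IsDensity ρ)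
    (hdec : ρ = ∑ i, ((p i : ℝ) : ℂ) • outer (ψ i)) :
    Km ρ ≤ ∑ i, p i * vnEntropy (trB (outer (ψ i))) ∧
    Km ρ ≤ sInf {x : ℝ | ∃ (m : ℕ) (q : Fin m → ℝ) (φ : Fin m → (Q2 → ℂ)),
      (∀ i, 0 ≤ q i) ∧ (∑ i, q i) = 1 ∧ (∀ i, ∑ k, ‖φ i k‖^2 = 1) ∧
      ρ = (∑ i, ((q i : ℝ) : ℂ) • outer (φ i)) ∧
      x = ∑ i, q i * vnEntropy (trB (outer (φ i)))} := by
  refine ⟨Km_le hp hpsum hψ hρ.1 hdec, le_csInf ⟨_, n, p, ψ, hp, hpsum, hψ, hdec, rfl⟩ ?_⟩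
  rintro x ⟨m, q, φ, hq, hqsum, hφ, hdec', rfl⟩
  exact Km_le hq hqsum hφ hρ.1 hdec'

end
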